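/- Let n ≥ 1 and bV, bF : ℤ × ℤ → EuclideanSpace ℝ (Fin n). Suppose ρV, ρF : ℤ × ℤ → ℝ and ρ̃V, ρ̃F : ℤ × ℤ → ℝ both satisfy ⟪bV(v), bF(f)⟫ = ρV(v) + ρF(f) and ⟪bV(v), bF(f)⟫ = ρ̃V(v) + ρ̃F(f) for every incident vertex–face pair (v, f). Then there exists ε ∈ ℝ such that ρ̃V(v) = ρV(v) + ε for all v ∈ ℤ × ℤ and ρ̃F(f) = ρF(f) − ε for all f ∈ ℤ × ℤ. (Hence every orthogonal binet has exactly a one-parameter family of Möbius lifts.) -/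

import Mathlib

open scoped InnerProductSpace

/-- A vertex `v` is incident to the face labeled `f` if `v` is one of its four corners. -/
def Incident (v f : ℤ × ℤ) : Prop :=
  v = f ∨ v = f + (1, 0) ∨ v = f + (0, 1) ∨ v = f + (1, 1)

open Function Relation

section IncidenceConnected

variable {V F : Type*} {R : V → F → Prop}

/-- Connectedness of the bipartite graph of an incidence relation `R` between vertices and faces,
expressed on the vertices: any two are joined by a chain in which consecutive vertices share a
face, and no face is isolated. The empty relation between empty types is allowed. -/
structure IncidenceConnected (R : V → F → Prop) : Prop where
  eqvGen : ∀ v w, EqvGen (fun v w ↦ ∃ f, R v f ∧ R w f) v w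
  exists_incident : ∀ f, ∃ v, R v f

namespace IncidenceConnected

theorem eq_of_forall_incident_eq {α : Type*} (hR : IncidenceConnected R) {d : V → α} {e : F → α}
    (h : ∀ v f, R v f → d v = e f) (v w : V) : d v = d w := by
  have eq_of_common_face : ∀ v w, (∃ f, R v f ∧ R w f) → d v = d w := by
    rintro v w ⟨f, hv, hw⟩
    rw [h v f hv, h w f hw]
  exact congrArg (Quot.lift d eq_of_common_face) (Quot.eqvGen_sound (hR.eqvGen v w))

theorem exists_eq_const_of_forall_incident_eq [Nonempty V] {α : Type*} (hR : IncidenceConnected R)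
    {d : V → α} {e : F → α} (h : ∀ v f, R v f → d v = e f) :
    ∃ c, (∀ v, d v = c) ∧ ∀ f, e f = c := by
  obtain ⟨v₀⟩ := ‹Nonempty V›
  refine ⟨d v₀, fun v ↦ hR.eq_of_forall_incident_eq h v v₀, fun f ↦ ?_⟩
  obtain ⟨v, hv⟩ := hR.exists_incident f
  rw [← h v f hv, hR.eq_of_forall_incident_eq h v v₀]

end IncidenceConnected

theorem stmt_1_general [Nonempty V] {A : Type*} [AddCommGroup A] (hR : IncidenceConnected R)
    {φ : V → F → A} {ρV ρV' : V → A} {ρF ρF' : F → A}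
    (h : ∀ v f, R v f → φ v f = ρV v + ρF f)
    (h' : ∀ v f, R v f → φ v f = ρV' v + ρF' f) :
    ∃ ε : A, (∀ v, ρV' v = ρV v + ε) ∧ ∀ f, ρF' f = ρF f - ε := by
  have vertex_change_eq_face_change :
      ∀ v f, R v f → ρV' v - ρV v = ρF f - ρF' f := fun v f hvf ↦ by
    rw [sub_eq_sub_iff_add_eq_add, ← h' v f hvf, h v f hvf, add_comm]
  obtain ⟨ε, hV, hF⟩ := hR.exists_eq_const_of_forall_incident_eq vertex_change_eq_face_change
  exact ⟨ε, fun v ↦ by rw [← hV v, add_sub_cancel], fun f ↦ by rw [← hF f, sub_sub_cancel]⟩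

end IncidenceConnected

theorem apply_eq_apply_zero_of_periodic {α : Type*} {d : ℤ × ℤ → α} (h₁ : Periodic d (1, 0))
    (h₂ : Periodic d (0, 1)) (v : ℤ × ℤ) : d v = d 0 := by
  simpa using (h₁.zsmul v.1).add_period (h₂.zsmul v.2) 0

theorem incidenceConnected_incident : IncidenceConnected Incident where
  eqvGen v w := by
    -- The map sending a vertex to its component is invariant under both unit translations.
    let component : ℤ × ℤ → Quot fun v w ↦ ∃ f, Incident v f ∧ Incident w f := Quot.mk _
    have periodic₁ : Periodic component (1, 0) := fun v ↦
      Quot.sound ⟨v, .inr (.inl rfl), .inl rfl⟩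
    have periodic₂ : Periodic component (0, 1) := fun v ↦
      Quot.sound ⟨v, .inr (.inr (.inl rfl)), .inl rfl⟩
    have component_eq_zero := apply_eq_apply_zero_of_periodic periodic₁ periodic₂
    exact Quot.eqvGen_exact ((component_eq_zero v).trans (component_eq_zero w).symm)
  exists_incident f := ⟨f, .inl rfl⟩

/-- Any two choices of the functions `ρ` (i.e. any two Möbius lifts of an orthogonal binet)
differ by adding a constant `ε` on vertices and subtracting it on faces. -/
theorem stmt_1 (n : ℕ) (hn : 1 ≤ n) (bV bF : ℤ × ℤ → EuclideanSpace ℝ (Fin n))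
    (ρV ρF ρV' ρF' : ℤ × ℤ → ℝ)
    (h : ∀ v f : ℤ × ℤ, Incident v f → ⟪bV v, bF f⟫_ℝ = ρV v + ρF f)
    (h' : ∀ v f : ℤ × ℤ, Incident v f → ⟪bV v, bF f⟫_ℝ = ρV' v + ρF' f) :
    ∃ ε : ℝ, (∀ v : ℤ × ℤ, ρV' v = ρV v + ε) ∧ (∀ f : ℤ × ℤ, ρF' f = ρF f - ε) :=
  stmt_1_general incidenceConnected_incident h h'
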